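/- Let θ ∈ [2π/3, π] and let u, v ∈ ℝ² be unit vectors with ⟪u,v⟫ = cos θ, and let M'(u,v) = {p ∈ ℝ² : ‖p‖ ≤ 1, ⟪p,u⟫ ≤ 1/2, ⟪p,v⟫ ≤ 1/2}. Then for every integer n ≥ 3 and every finite set S ⊆ M'(u,v) with at most n points, there exists a finite set T ⊆ M with at most n points such that volume(convexHull ℝ T) ≥ volume(convexHull ℝ S). -/

import Mathlib

open Metric MeasureTheory Real
open scoped RealInnerProductSpace

noncomputable section

/-- The Euclidean plane. -/
abbrev Pt := EuclideanSpace ℝ (Fin 2)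

/-- The set `M`: the closed unit disk truncated by two chords of length `√3` sharing the
endpoint `(0, −1)`. -/
def M : Set Pt :=
  {p | p 0 ^ 2 + p 1 ^ 2 ≤ 1 ∧ Real.sqrt 3 * p 0 - p 1 ≤ 1 ∧ -Real.sqrt 3 * p 0 - p 1 ≤ 1}

/-- The set `M'(u,v)`: the closed unit disk truncated by two non-crossing chords of length `√3`
whose bounding half-planes have inward normals `u` and `v`. -/
def M' (u v : Pt) : Set Pt := {p | ‖p‖ ≤ 1 ∧ ⟪p, u⟫ ≤ 1 / 2 ∧ ⟪p, v⟫ ≤ 1 / 2}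


/-- Length of a section under a convex combination. -/
lemma section_len (a b : ℝ) (ha : 0 ≤ a) (hb : 0 ≤ b) (I J K : Set ℝ)
    (hI : IsCompact I) (hJ : IsCompact J) (cI : Convex ℝ I) (cJ : Convex ℝ J)
    (h : ∀ t ∈ K, ∃ r ∈ I, ∃ s ∈ J, t = a * r + b * s) :
    volume K ≤ ENNReal.ofReal a * volume I + ENNReal.ofReal b * volume J := by
  rcases K.eq_empty_or_nonempty with rfl | ⟨t, ht⟩
  · simp
  obtain ⟨r, hr, s, hs, -⟩ := h t ht
  have eI := eq_Icc_of_connected_compact ⟨⟨r, hr⟩, cI.isPreconnected⟩ hI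
  have eJ := eq_Icc_of_connected_compact ⟨⟨s, hs⟩, cJ.isPreconnected⟩ hJ
  have hIle : sInf I ≤ sSup I := by
    rw [eI] at hr; exact hr.1.trans hr.2
  have hJle : sInf J ≤ sSup J := by
    rw [eJ] at hs; exact hs.1.trans hs.2
  have hK : K ⊆ Set.Icc (a * sInf I + b * sInf J) (a * sSup I + b * sSup J) := by
    intro t ht
    obtain ⟨r, hr, s, hs, rfl⟩ := h t ht
    rw [eI] at hr
    rw [eJ] at hs
    obtain ⟨h1, h2⟩ := hr
    obtain ⟨h3, h4⟩ := hs
    constructor <;> gcongr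
  have vI : volume I = ENNReal.ofReal (sSup I - sInf I) := by
    conv_lhs => rw [eI]
    rw [Real.volume_Icc]
  have vJ : volume J = ENNReal.ofReal (sSup J - sInf J) := by
    conv_lhs => rw [eJ]
    rw [Real.volume_Icc]
  calc volume K ≤ _ := measure_mono hK
    _ = ENNReal.ofReal (a * (sSup I - sInf I) + b * (sSup J - sInf J)) := by
        rw [Real.volume_Icc]; congr 1; ring
    _ = _ := by
        rw [vI, vJ, ENNReal.ofReal_add, ENNReal.ofReal_mul ha, ENNReal.ofReal_mul hb]
        · exact mul_nonneg ha (by linarith)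
        · exact mul_nonneg hb (by linarith)

lemma coord_equiv (w : Pt) (hw : w ≠ 0) :
    ∃ L : (ℝ × ℝ) ≃L[ℝ] Pt, ∀ y t : ℝ, L (y, t) = y • !₂[-w 1, w 0] + t • w := by
  let f : (ℝ × ℝ) →ₗ[ℝ] Pt :=
    (LinearMap.toSpanSingleton ℝ Pt !₂[-w 1, w 0]).coprod (LinearMap.toSpanSingleton ℝ Pt w)
  have hd : w 0 ^ 2 + w 1 ^ 2 ≠ 0 := by
    intro h
    apply hw
    ext i
    fin_cases i <;> simp <;> nlinarith [sq_nonneg (w 0), sq_nonneg (w 1)]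
  have hf : Function.Injective f := by
    rw [← LinearMap.ker_eq_bot, LinearMap.ker_eq_bot']
    rintro ⟨y, t⟩ h
    have h0 := congrArg (fun p : Pt => p 0) h
    have h1 := congrArg (fun p : Pt => p 1) h
    simp [f] at h0 h1
    have hy : y * (w 0 ^ 2 + w 1 ^ 2) = 0 := by linear_combination (-w 1) * h0 + w 0 * h1
    have ht : t * (w 0 ^ 2 + w 1 ^ 2) = 0 := by linear_combination (w 0) * h0 + w 1 * h1
    simp [hd] at hy ht
    simp [hy, ht]
  let e := LinearMap.linearEquivOfInjective f hf (by simp)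
  refine ⟨e.toContinuousLinearEquiv, fun y t => ?_⟩
  simp [e, f]

lemma hull_comb (F : Finset Pt) (p₁ p₂ : Pt) (a b : ℝ)
    (hab : a + b = 1) (x : Pt) (hx : x ∈ convexHull ℝ (insert (a • p₁ + b • p₂) (F : Set Pt))) :
    ∃ x₁ ∈ convexHull ℝ (insert p₁ (F : Set Pt)), ∃ x₂ ∈ convexHull ℝ (insert p₂ (F : Set Pt)),
      x = a • x₁ + b • x₂ ∧ ∃ l : ℝ, x₁ - x₂ = l • (p₁ - p₂) := by
  let Z : Set Pt := {x | ∃ x₁ ∈ convexHull ℝ (insert p₁ (F : Set Pt)),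
    ∃ x₂ ∈ convexHull ℝ (insert p₂ (F : Set Pt)),
      x = a • x₁ + b • x₂ ∧ ∃ l : ℝ, x₁ - x₂ = l • (p₁ - p₂)}
  have hZ : Convex ℝ Z := by
    rintro x ⟨x₁, h1, x₂, h2, rfl, l, hl⟩ y ⟨y₁, k1, y₂, k2, rfl, m, hm⟩ c d hc hd hcd
    refine ⟨c • x₁ + d • y₁, convex_convexHull ℝ _ h1 k1 hc hd hcd,
      c • x₂ + d • y₂, convex_convexHull ℝ _ h2 k2 hc hd hcd, by module, c * l + d * m, ?_⟩
    have : c • x₁ + d • y₁ - (c • x₂ + d • y₂) = c • (x₁ - x₂) + d • (y₁ - y₂) := by module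
    rw [this, hl, hm]; module
  have hsub : insert (a • p₁ + b • p₂) (F : Set Pt) ⊆ Z := by
    intro z hz
    rcases hz with rfl | hz
    · exact ⟨p₁, subset_convexHull ℝ _ (Set.mem_insert _ _), p₂,
        subset_convexHull ℝ _ (Set.mem_insert _ _), rfl, 1, by simp⟩
    · refine ⟨z, subset_convexHull ℝ _ (Set.mem_insert_of_mem _ hz), z,
        subset_convexHull ℝ _ (Set.mem_insert_of_mem _ hz), ?_, 0, by simp⟩
      rw [← add_smul, hab, one_smul]
  exact convexHull_min hsub hZ hx

lemma vol_convex (F : Finset Pt) (p₁ p₂ : Pt) (a b : ℝ) (ha : 0 ≤ a) (hb : 0 ≤ b)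
    (hab : a + b = 1) :
    volume (convexHull ℝ (insert (a • p₁ + b • p₂) (F : Set Pt))) ≤
      ENNReal.ofReal a * volume (convexHull ℝ (insert p₁ (F : Set Pt))) +
      ENNReal.ofReal b * volume (convexHull ℝ (insert p₂ (F : Set Pt))) := by
  by_cases hw : p₁ - p₂ = 0
  · have : p₁ = p₂ := sub_eq_zero.1 hw
    subst this
    rw [← add_smul, hab, one_smul, ← add_mul, ← ENNReal.ofReal_add ha hb, hab]
    simp
  obtain ⟨L, hL⟩ := coord_equiv _ hw
  have hcomp : ∀ p : Pt, IsCompact (convexHull ℝ (insert p (F : Set Pt))) := fun p =>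
    (F.finite_toSet.insert p).isCompact_convexHull ℝ
  have hH : (Measure.map L (volume : Measure (ℝ × ℝ))).IsAddHaarMeasure :=
    L.isAddHaarMeasure_map _
  obtain ⟨C, hC⟩ : ∃ C : ENNReal, (volume : Measure Pt) = C • Measure.map L volume :=
    ⟨_, Measure.isAddLeftInvariant_eq_smul (volume : Measure Pt) (Measure.map L volume)⟩
  have hvol : ∀ p : Pt, volume (convexHull ℝ (insert p (F : Set Pt))) =
      C * ∫⁻ y : ℝ, volume {t : ℝ | L (y, t) ∈ convexHull ℝ (insert p (F : Set Pt))} := by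
    intro p
    have hm := (hcomp p).measurableSet
    have hm' : MeasurableSet (L ⁻¹' (convexHull ℝ (insert p (F : Set Pt)))) :=
      L.continuous.measurable hm
    rw [hC]
    rw [Measure.smul_apply, Measure.map_apply L.continuous.measurable hm,
      Measure.volume_eq_prod, Measure.prod_apply hm']
    rfl
  have hsm : ∀ p : Pt, Measurable fun y : ℝ =>
      volume {t : ℝ | L (y, t) ∈ convexHull ℝ (insert p (F : Set Pt))} := by
    intro p
    have hm := (hcomp p).measurableSet
    have hm' : MeasurableSet (L ⁻¹' (convexHull ℝ (insert p (F : Set Pt)))) :=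
      L.continuous.measurable hm
    exact measurable_measure_prodMk_left hm'
  rw [hvol, hvol, hvol, mul_left_comm, mul_left_comm (ENNReal.ofReal b), ← mul_add,
    ← lintegral_const_mul (ENNReal.ofReal a) (hsm _),
    ← lintegral_const_mul (ENNReal.ofReal b) (hsm _),
    ← lintegral_add_left ((hsm _).const_mul _)]
  gcongr with y
  have hsc : ∀ p : Pt, IsCompact {t : ℝ | L (y, t) ∈ convexHull ℝ (insert p (F : Set Pt))} := by
    intro p
    have h1 : IsCompact (L.symm '' convexHull ℝ (insert p (F : Set Pt))) :=
      (hcomp p).image L.symm.continuous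
    refine (h1.image continuous_snd).of_isClosed_subset ?_ ?_
    · exact (hcomp p).isClosed.preimage (by fun_prop)
    · intro t ht
      exact ⟨(y, t), ⟨_, ht, by simp⟩, rfl⟩
  have hcv : ∀ p : Pt, Convex ℝ {t : ℝ | L (y, t) ∈ convexHull ℝ (insert p (F : Set Pt))} := by
    intro p s hs t ht c d hc hd hcd
    have := convex_convexHull ℝ _ hs ht hc hd hcd
    have e : L (y, c • s + d • t) = c • L (y, s) + d • L (y, t) := by
      rw [← map_smul, ← map_smul, ← map_add]
      congr 1
      ext
      · simp [← add_mul, hcd]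
      · simp
    show L (y, c • s + d • t) ∈ convexHull ℝ (insert p (F : Set Pt))
    rw [e]; exact this
  apply section_len a b ha hb _ _ _ (hsc _) (hsc _) (hcv _) (hcv _)
  intro t ht
  obtain ⟨x₁, h1, x₂, h2, hx, l, hl⟩ := hull_comb F p₁ p₂ a b hab _ ht
  -- `x₁ = L (y, t + b l)`, `x₂ = L (y, t - a l)`
  have e1 : x₁ = L (y, t + b * l) := by
    have : x₁ = (a • x₁ + b • x₂) + b • (x₁ - x₂) := by
      have : x₁ = (a + b) • x₁ := by rw [hab, one_smul]
      nth_rewrite 1 [this]; module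
    rw [this, ← hx, hl, hL, hL]; module
  have e2 : x₂ = L (y, t - a * l) := by
    have : x₂ = (a • x₁ + b • x₂) - a • (x₁ - x₂) := by
      have : x₂ = (a + b) • x₂ := by rw [hab, one_smul]
      nth_rewrite 1 [this]; module
    rw [this, ← hx, hl, hL, hL]; module
  refine ⟨t + b * l, by rw [e1] at h1; exact h1, t - a * l, by rw [e2] at h2; exact h2, ?_⟩
  linear_combination -t * hab

/-- A vertex can be moved to a generating set without decreasing the area. -/
lemma move_one (E : Set Pt) (F : Finset Pt) (p : Pt) (hp : p ∈ convexHull ℝ E) :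
    ∃ e ∈ E, volume (convexHull ℝ (insert p (F : Set Pt))) ≤
      volume (convexHull ℝ (insert e (F : Set Pt))) := by
  by_contra! hcon
  set V := volume (convexHull ℝ (insert p (F : Set Pt))) with hV
  have hcv : Convex ℝ {x : Pt | volume (convexHull ℝ (insert x (F : Set Pt))) < V} := by
    intro x hx y hy a b ha hb hab
    have hx' : volume (convexHull ℝ (insert x (F : Set Pt))) < V := hx
    have hy' : volume (convexHull ℝ (insert y (F : Set Pt))) < V := hy
    refine (vol_convex F x y a b ha hb hab).trans_lt ?_
    have hm := max_lt hx' hy'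
    refine lt_of_le_of_lt ?_ hm
    set m := max (volume (convexHull ℝ (insert x (F : Set Pt))))
      (volume (convexHull ℝ (insert y (F : Set Pt))))
    calc _ ≤ ENNReal.ofReal a * m + ENNReal.ofReal b * m := by
          gcongr
          · exact le_max_left _ _
          · exact le_max_right _ _
      _ = m := by rw [← add_mul, ← ENNReal.ofReal_add ha hb, hab]; simp
  have hsub : E ⊆ {x : Pt | volume (convexHull ℝ (insert x (F : Set Pt))) < V} :=
    fun e he => hcon e he
  have : volume (convexHull ℝ (insert p (F : Set Pt))) < V := convexHull_min hsub hcv hp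
  exact lt_irrefl _ this

lemma move_all (E : Set Pt) (S : Finset Pt) (hS : (S : Set Pt) ⊆ convexHull ℝ E) :
    ∀ R : Finset Pt, ∃ S' : Finset Pt, (S' : Set Pt) ⊆ E ∧ S'.card ≤ S.card ∧
      volume (convexHull ℝ ((S : Set Pt) ∪ R)) ≤ volume (convexHull ℝ ((S' : Set Pt) ∪ R)) := by
  classical
  induction S using Finset.induction_on with
  | empty => exact fun R => ⟨∅, by simp, by simp, le_rfl⟩
  | insert x S hx ih =>
    intro R
    obtain ⟨e, he, hle⟩ := move_one E (S ∪ R) x (hS (by simp))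
    obtain ⟨S', h1, h2, h3⟩ := ih (fun z hz => hS (by simp at hz ⊢; exact Or.inr hz)) (insert e R)
    refine ⟨insert e S', ?_, ?_, ?_⟩
    · intro z hz
      simp only [Finset.coe_insert] at hz
      rcases hz with rfl | hz
      · exact he
      · exact h1 hz
    · rw [Finset.card_insert_of_notMem hx]
      exact (Finset.card_insert_le _ _).trans (by omega)
    · simp only [Finset.coe_insert, Finset.coe_union] at *
      rw [Set.insert_union]
      refine hle.trans ?_
      rw [Set.insert_union, ← Set.union_insert, ← Set.union_insert]
      exact h3

/-- Unit circle part of `M'`. -/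
def arcs (u v : Pt) : Set Pt := {p | ‖p‖ = 1 ∧ ⟪p, u⟫ ≤ 1 / 2 ∧ ⟪p, v⟫ ≤ 1 / 2}

lemma no_cross (u v e : Pt) (hu : ‖u‖ = 1) (hv : ‖v‖ = 1) (huv : ⟪u, v⟫ ≤ -1 / 2)
    (he : ‖e‖ ≤ 1) (h1 : 1 / 2 ≤ ⟪e, v⟫) : ⟪e, u⟫ ≤ 1 / 2 := by
  by_contra! h
  have h2 : ‖u + v‖ ^ 2 ≤ 1 := by
    rw [norm_add_sq_real, hu, hv]; linarith
  have h3 : ‖u + v‖ ≤ 1 := by nlinarith [norm_nonneg (u + v)]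
  have h4 := real_inner_le_norm e (u + v)
  rw [inner_add_right] at h4
  have h5 : ‖e‖ * ‖u + v‖ ≤ 1 := mul_le_one₀ he (norm_nonneg _) h3
  linarith

lemma reach_circle (p w : Pt) (hp : ‖p‖ ≤ 1) (hw : ‖w‖ = 1) : ∃ t : ℝ, 0 ≤ t ∧ ‖p + t • w‖ = 1 := by
  have hc : ContinuousOn (fun t : ℝ => ‖p + t • w‖) (Set.Icc 0 2) := by fun_prop
  have h2 : 1 ≤ ‖p + (2 : ℝ) • w‖ := by
    have := norm_sub_norm_le ((2 : ℝ) • w) (-p)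
    rw [norm_neg, norm_smul, hw, sub_neg_eq_add, add_comm ((2 : ℝ) • w)] at this
    norm_num at this
    linarith
  obtain ⟨t, ht, h⟩ := intermediate_value_Icc (by norm_num : (0 : ℝ) ≤ 2) hc
    (show (1 : ℝ) ∈ Set.Icc _ _ from ⟨by simpa using hp, h2⟩)
  exact ⟨t, ht.1, h⟩

lemma perp_exists (u : Pt) (hu : ‖u‖ = 1) : ∃ w : Pt, ‖w‖ = 1 ∧ ⟪w, u⟫ = 0 := by
  refine ⟨!₂[-u 1, u 0], ?_, ?_⟩
  · rw [EuclideanSpace.norm_eq] at hu ⊢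
    simp at hu ⊢
    rw [add_comm]; exact hu
  · simp [PiLp.inner_apply]; ring

lemma between (C : Set Pt) (hC : Convex ℝ C) (p w : Pt) (s t : ℝ) (hs : 0 ≤ s) (ht : 0 ≤ t)
    (h1 : p + s • w ∈ C) (h2 : p + t • (-w) ∈ C) : p ∈ C := by
  rcases eq_or_lt_of_le hs with rfl | hs'
  · simpa using h1
  have hst : 0 < s + t := by linarith
  have := hC h1 h2 (div_nonneg ht hst.le) (div_nonneg hs hst.le) (by field_simp; ring)
  convert this using 1
  have e : (t / (s + t)) * s - (s / (s + t)) * t = 0 := by ring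
  have e2 : t / (s + t) + s / (s + t) = 1 := by field_simp; ring
  have : (t / (s + t)) • (p + s • w) + (s / (s + t)) • (p + t • -w) =
      (t / (s + t) + s / (s + t)) • p + ((t / (s + t)) * s - (s / (s + t)) * t) • w := by module
  rw [this, e, e2]; simp

lemma chord_mem (u v q : Pt) (hu : ‖u‖ = 1) (hv : ‖v‖ = 1) (huv : ⟪u, v⟫ ≤ -1 / 2)
    (hq : ‖q‖ ≤ 1) (h : ⟪q, v⟫ = 1 / 2) : q ∈ convexHull ℝ (arcs u v) := by
  obtain ⟨w, hw, hwv⟩ := perp_exists v hv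
  obtain ⟨s, hs, hs1⟩ := reach_circle q w hq hw
  obtain ⟨t, ht, ht1⟩ := reach_circle q (-w) hq (by rwa [norm_neg])
  have k1 : ⟪q + s • w, v⟫ = 1 / 2 := by rw [inner_add_left, inner_smul_left, hwv, h]; simp
  have k2 : ⟪q + t • -w, v⟫ = 1 / 2 := by
    rw [inner_add_left, inner_smul_left, inner_neg_left, hwv, h]; simp
  refine between _ (convex_convexHull ℝ _) q w s t hs ht ?_ ?_
  · exact subset_convexHull ℝ _ ⟨hs1, no_cross u v _ hu hv huv hs1.le k1.ge, k1.le⟩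
  · exact subset_convexHull ℝ _ ⟨ht1, no_cross u v _ hu hv huv ht1.le k2.ge, k2.le⟩

lemma ray_mem (u v p w : Pt) (hu : ‖u‖ = 1) (hv : ‖v‖ = 1) (huv : ⟪u, v⟫ ≤ -1 / 2)
    (hp : p ∈ M' u v) (hw : ‖w‖ = 1) (hwu : ⟪w, u⟫ = 0) :
    ∃ s : ℝ, 0 ≤ s ∧ p + s • w ∈ convexHull ℝ (arcs u v) := by
  obtain ⟨h1, h2, h3⟩ := hp
  obtain ⟨t, ht, ht1⟩ := reach_circle p w h1 hw
  have k : ∀ s : ℝ, ⟪p + s • w, u⟫ ≤ 1 / 2 := by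
    intro s; rw [inner_add_left, inner_smul_left, hwu]; simpa using h2
  by_cases hc : ⟪p + t • w, v⟫ ≤ 1 / 2
  · exact ⟨t, ht, subset_convexHull ℝ _ ⟨ht1, k t, hc⟩⟩
  push Not at hc
  have hcont : ContinuousOn (fun s : ℝ => ⟪p + s • w, v⟫) (Set.Icc 0 t) := by fun_prop
  obtain ⟨s, hs, h⟩ := intermediate_value_Icc ht hcont
    (show (1 / 2 : ℝ) ∈ Set.Icc _ _ from ⟨by simpa using h3, hc.le⟩)
  refine ⟨s, hs.1, chord_mem u v _ hu hv huv ?_ h⟩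
  have hcv := (convex_closedBall (0 : Pt) 1)
  have hseg : p + s • w ∈ segment ℝ p (p + t • w) := by
    rcases eq_or_lt_of_le ht with rfl | ht'
    · have : s = 0 := le_antisymm hs.2 hs.1
      simp [this]
    · rw [segment_eq_image']
      refine ⟨s / t, ⟨div_nonneg hs.1 ht, (div_le_one ht').2 hs.2⟩, ?_⟩
      simp only [add_sub_cancel_left, smul_smul]
      rw [div_mul_cancel₀ _ ht'.ne']
  have := hcv.segment_subset (x := p) (y := p + t • w) (by simpa using h1) (by simp [ht1]) hseg
  simpa using this

lemma M'_subset (u v : Pt) (hu : ‖u‖ = 1) (hv : ‖v‖ = 1) (huv : ⟪u, v⟫ ≤ -1 / 2) :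
    M' u v ⊆ convexHull ℝ (arcs u v) := by
  intro p hp
  obtain ⟨w, hw, hwu⟩ := perp_exists u hu
  obtain ⟨s, hs, h1⟩ := ray_mem u v p w hu hv huv hp hw hwu
  obtain ⟨t, ht, h2⟩ := ray_mem u v p (-w) hu hv huv hp (by rwa [norm_neg])
    (by rw [inner_neg_left, hwu, neg_zero])
  exact between _ (convex_convexHull ℝ _) p w s t hs ht h1 h2

/-- Signed side of `z` with respect to the line `pq`. -/
def side (p q z : Pt) : ℝ := (z 0 - p 0) * (q 1 - p 1) - (z 1 - p 1) * (q 0 - p 0)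

lemma side_comb (p q x y : Pt) (a b : ℝ) (hab : a + b = 1) :
    side p q (a • x + b • y) = a * side p q x + b * side p q y := by
  obtain rfl : b = 1 - a := by linarith
  simp [side]; ring

lemma side_cont (p q : Pt) : Continuous (side p q) := by
  unfold side; fun_prop

lemma convex_side_le (p q : Pt) : Convex ℝ {z | side p q z ≤ 0} := by
  intro x hx y hy a b ha hb hab
  simp only [Set.mem_ofPred_eq] at *
  rw [side_comb p q x y a b hab]
  nlinarith

lemma convex_side_ge (p q : Pt) : Convex ℝ {z | 0 ≤ side p q z} := by
  intro x hx y hy a b ha hb hab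
  simp only [Set.mem_ofPred_eq] at *
  rw [side_comb p q x y a b hab]
  nlinarith [mul_nonneg ha hx, mul_nonneg hb hy]

lemma norm_sq_coord (p : Pt) : ‖p‖ ^ 2 = p 0 ^ 2 + p 1 ^ 2 := by
  rw [EuclideanSpace.norm_sq_eq]; simp

lemma coord_dist_pos (p q : Pt) (hpq : p ≠ q) : 0 < (q 0 - p 0) ^ 2 + (q 1 - p 1) ^ 2 := by
  have h : 0 < ‖q - p‖ ^ 2 := by
    have := norm_pos_iff.2 (sub_ne_zero.2 hpq.symm)
    positivity
  rw [norm_sq_coord] at h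
  simpa using h

lemma chord_seg (p q c : Pt) (hp : ‖p‖ = 1) (hq : ‖q‖ = 1) (hpq : p ≠ q) (hc : ‖c‖ ≤ 1)
    (h : side p q c = 0) : c ∈ segment ℝ p q := by
  have hd := coord_dist_pos p q hpq
  have p2 : p 0 ^ 2 + p 1 ^ 2 = 1 := by rw [← norm_sq_coord, hp]; norm_num
  have q2 : q 0 ^ 2 + q 1 ^ 2 = 1 := by rw [← norm_sq_coord, hq]; norm_num
  have c2 : c 0 ^ 2 + c 1 ^ 2 ≤ 1 := by rw [← norm_sq_coord]; nlinarith [norm_nonneg c]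
  set d := (q 0 - p 0) ^ 2 + (q 1 - p 1) ^ 2 with hdd
  set s := ((c 0 - p 0) * (q 0 - p 0) + (c 1 - p 1) * (q 1 - p 1)) / d with hs
  have hsd : s * d = (c 0 - p 0) * (q 0 - p 0) + (c 1 - p 1) * (q 1 - p 1) := by
    rw [hs]; field_simp
  unfold side at h
  have c0 : c 0 = p 0 + s * (q 0 - p 0) := by
    apply mul_right_cancel₀ hd.ne'
    linear_combination (-(q 0 - p 0)) * hsd + (q 1 - p 1) * h + (c 0 - p 0) * hdd
  have c1 : c 1 = p 1 + s * (q 1 - p 1) := by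
    apply mul_right_cancel₀ hd.ne'
    linear_combination (-(q 1 - p 1)) * hsd - (q 0 - p 0) * h + (c 1 - p 1) * hdd
  have hs2 : (s ^ 2 - s) * d ≤ 0 := by
    have : c 0 ^ 2 + c 1 ^ 2 - 1 = (s ^ 2 - s) * d := by
      rw [c0, c1, hdd]
      linear_combination (1 - s) * p2 + s * q2
    linarith
  have hs3 : s ^ 2 - s ≤ 0 := by
    by_contra! hh
    nlinarith
  rw [segment_eq_image']
  refine ⟨s, ⟨by nlinarith, by nlinarith⟩, ?_⟩
  ext i
  fin_cases i
  · simp [c0]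
  · simp [c1]

lemma hull_split (S₁ S₂ : Set Pt) (p q : Pt) (hp : ‖p‖ = 1) (hq : ‖q‖ = 1) (hpq : p ≠ q)
    (p1 : p ∈ S₁) (q1 : q ∈ S₁) (p2 : p ∈ S₂) (q2 : q ∈ S₂)
    (n1 : ∀ x ∈ S₁, ‖x‖ = 1) (n2 : ∀ x ∈ S₂, ‖x‖ = 1)
    (s1 : ∀ x ∈ S₁, side p q x ≤ 0) (s2 : ∀ x ∈ S₂, 0 ≤ side p q x) :
    convexHull ℝ (S₁ ∪ S₂) ⊆ convexHull ℝ S₁ ∪ convexHull ℝ S₂ := by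
  intro x hx
  rw [convexHull_union ⟨p, p1⟩ ⟨p, p2⟩, mem_convexJoin] at hx
  obtain ⟨a, ha, b, hb, hx⟩ := hx
  have sa : side p q a ≤ 0 := convexHull_min s1 (convex_side_le p q) ha
  have sb : 0 ≤ side p q b := convexHull_min s2 (convex_side_ge p q) hb
  have na : a ∈ Metric.closedBall (0 : Pt) 1 :=
    convexHull_min (fun z hz => by simp [n1 z hz]) (convex_closedBall (0 : Pt) 1) ha
  have nb : b ∈ Metric.closedBall (0 : Pt) 1 :=
    convexHull_min (fun z hz => by simp [n2 z hz]) (convex_closedBall (0 : Pt) 1) hb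
  rw [segment_eq_image'] at hx
  obtain ⟨t, ⟨ht0, ht1⟩, rfl⟩ := hx
  have hcont : ContinuousOn (fun r : ℝ => side p q (a + r • (b - a))) (Set.Icc 0 1) :=
    ((side_cont p q).comp (by fun_prop)).continuousOn
  obtain ⟨r, ⟨hr0, hr1⟩, hr⟩ := intermediate_value_Icc zero_le_one hcont
    (show (0 : ℝ) ∈ Set.Icc _ _ from ⟨by simpa using sa, by simpa using sb⟩)
  simp only at hr
  have hc : ‖a + r • (b - a)‖ ≤ 1 := by
    have hm : a + r • (b - a) ∈ segment ℝ a b := by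
      rw [segment_eq_image']; exact ⟨r, ⟨hr0, hr1⟩, rfl⟩
    simpa using (convex_closedBall (0 : Pt) 1).segment_subset na nb hm
  have hseg := chord_seg p q _ hp hq hpq hc hr
  have c1 : a + r • (b - a) ∈ convexHull ℝ S₁ :=
    segment_subset_convexHull p1 q1 hseg
  have c2 : a + r • (b - a) ∈ convexHull ℝ S₂ :=
    segment_subset_convexHull p2 q2 hseg
  rcases le_total t r with htr | htr
  · left
    refine between _ (convex_convexHull ℝ S₁) _ (b - a) (r - t) t (by linarith) ht0 ?_ ?_
    · convert c1 using 1; module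
    · convert ha using 1; module
  · right
    refine between _ (convex_convexHull ℝ S₂) _ (b - a) (1 - t) (t - r) (by linarith)
      (by linarith) ?_ ?_
    · convert hb using 1; module
    · convert c2 using 1; module

lemma line_null (p q : Pt) (hpq : p ≠ q) : volume {z | side p q z = 0} = 0 := by
  let N : Pt := !₂[q 1 - p 1, -(q 0 - p 0)]
  have hd := coord_dist_pos p q hpq
  let A : AffineSubspace ℝ Pt := AffineSubspace.mk' p (LinearMap.ker (innerₛₗ ℝ N))
  have hA : A ≠ ⊤ := by
    intro h
    have : A.direction = ⊤ := by rw [h]; exact AffineSubspace.direction_top ℝ Pt Pt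
    rw [AffineSubspace.direction_mk'] at this
    have hN : N ∈ LinearMap.ker (innerₛₗ ℝ N) := by rw [this]; trivial
    rw [LinearMap.mem_ker] at hN
    simp [N, PiLp.inner_apply] at hN
    nlinarith
  refine measure_mono_null ?_ (Measure.addHaar_affineSubspace volume A hA)
  intro z hz
  show z ∈ A
  rw [AffineSubspace.mem_mk', LinearMap.mem_ker]
  have hz' : side p q z = 0 := hz
  unfold side at hz'
  simp [N, PiLp.inner_apply]
  linarith

lemma reflect_form (p q z : Pt) : ∃ k : ℝ,
    (ℝ ∙ (p - q))ᗮ.reflection z = z + k • (p - q) := by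
  have h := Submodule.reflection_orthogonal_apply (K := ℝ ∙ (p - q)) z
  rw [h, Submodule.reflection_apply]
  obtain ⟨k, hk⟩ := Submodule.mem_span_singleton.1
    ((ℝ ∙ (p - q)).starProjection_apply_mem z)
  refine ⟨-2 * k, ?_⟩
  rw [← hk]; module

lemma side_reflect (p q z : Pt) : side p q ((ℝ ∙ (p - q))ᗮ.reflection z) = side p q z := by
  obtain ⟨k, hk⟩ := reflect_form p q z
  rw [hk]
  simp [side]; ring

lemma rearr (A B : Finset Pt) (p q : Pt) (hp : p ∈ A) (hq : q ∈ B)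
    (nA : ∀ x ∈ A, ‖x‖ = 1) (nB : ∀ x ∈ B, ‖x‖ = 1)
    (hAB : ∀ x ∈ A, ∀ y ∈ B, ⟪x, y⟫ ≤ -1 / 2)
    (sA : ∀ x ∈ A, side p q x ≤ 0) (sB : ∀ y ∈ B, 0 ≤ side p q y) :
    ∃ T : Finset Pt, T.card ≤ A.card + B.card ∧
      (∀ z ∈ T, z = q ∨ (‖z‖ ≤ 1 ∧ ⟪z, q⟫ ≤ -1 / 2)) ∧
      volume (convexHull ℝ ((A : Set Pt) ∪ B)) ≤ volume (convexHull ℝ (T : Set Pt)) := by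
  classical
  have hpq : p ≠ q := by
    rintro rfl
    have := hAB p hp p hq
    rw [real_inner_self_eq_norm_sq, nA p hp] at this
    norm_num at this
  set σ : Pt ≃ₗᵢ[ℝ] Pt := (ℝ ∙ (p - q))ᗮ.reflection with hσ
  have σp : σ p = q := Submodule.reflection_sub (by rw [nA p hp, nB q hq])
  have σq : σ q = p := by rw [← σp, hσ, Submodule.reflection_reflection]
  let T : Finset Pt := insert q (A ∪ (B.erase q).image σ)
  have spq : side p q p = 0 := by simp [side]
  have sqq : side p q q = 0 := by simp [side]; ring
  refine ⟨T, ?_, ?_, ?_⟩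
  · have h1 := Finset.card_insert_le q (A ∪ (B.erase q).image σ)
    have h2 := Finset.card_union_le A ((B.erase q).image σ)
    have h3 := Finset.card_image_le (s := B.erase q) (f := σ)
    have h4 := Finset.card_erase_add_one hq
    show (insert q (A ∪ (B.erase q).image σ)).card ≤ _
    omega
  · intro z hz
    simp only [T, Finset.mem_insert, Finset.mem_union, Finset.mem_image] at hz
    rcases hz with rfl | hz | ⟨y, hy, rfl⟩
    · exact Or.inl rfl
    · exact Or.inr ⟨(nA z hz).le, hAB z hz q hq⟩
    · have hyB := Finset.mem_of_mem_erase hy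
      refine Or.inr ⟨by rw [σ.norm_map]; exact (nB y hyB).le, ?_⟩
      rw [← σp, σ.inner_map_map, real_inner_comm]
      exact hAB p hp y hyB
  · set S₁ : Set Pt := insert q (A : Set Pt) with hS₁
    set S₂ : Set Pt := insert p (B : Set Pt) with hS₂
    have f1 : S₁.Finite := A.finite_toSet.insert q
    have f2 : S₂.Finite := B.finite_toSet.insert p
    have s1 : ∀ x ∈ S₁, side p q x ≤ 0 := by
      rintro x (rfl | hx)
      · exact sqq.le
      · exact sA x hx
    have s2 : ∀ x ∈ S₂, 0 ≤ side p q x := by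
      rintro x (rfl | hx)
      · exact spq.ge
      · exact sB x hx
    have hsub := hull_split S₁ S₂ p q (nA p hp) (nB q hq) hpq
      (Or.inr hp) (Or.inl rfl) (Or.inl rfl) (Or.inr hq)
      (by rintro x (rfl | hx)
          · exact nB _ hq
          · exact nA x hx)
      (by rintro x (rfl | hx)
          · exact nA _ hp
          · exact nB x hx) s1 s2
    have himg : σ '' convexHull ℝ S₂ = convexHull ℝ (σ '' S₂) :=
      σ.toLinearEquiv.toLinearMap.image_convexHull S₂
    have hm1 := ((f1.isCompact_convexHull ℝ).measurableSet)
    have hm2 := ((f2.isCompact_convexHull ℝ).measurableSet)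
    have hm3 : MeasurableSet (σ '' convexHull ℝ S₂) := by
      rw [himg]; exact ((f2.image σ).isCompact_convexHull ℝ).measurableSet
    have hvol : volume (σ '' convexHull ℝ S₂) = volume (convexHull ℝ S₂) := by
      rw [← σ.measurePreserving.measure_preimage hm3.nullMeasurableSet,
        Set.preimage_image_eq _ σ.injective]
    have hdis : AEDisjoint volume (convexHull ℝ S₁) (σ '' convexHull ℝ S₂) := by
      refine measure_mono_null ?_ (line_null p q hpq)
      rintro z ⟨hz1, y, hy, rfl⟩
      have k1 : side p q (σ y) ≤ 0 := convexHull_min s1 (convex_side_le p q) hz1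
      have k2 : 0 ≤ side p q y := convexHull_min s2 (convex_side_ge p q) hy
      have k3 : side p q (σ y) = side p q y := side_reflect p q y
      show side p q (σ y) = 0
      linarith
    calc volume (convexHull ℝ ((A : Set Pt) ∪ B))
        ≤ volume (convexHull ℝ S₁ ∪ convexHull ℝ S₂) := by
          refine measure_mono (subset_trans (convexHull_mono ?_) hsub)
          exact Set.union_subset_union (Set.subset_insert _ _) (Set.subset_insert _ _)
      _ ≤ volume (convexHull ℝ S₁) + volume (convexHull ℝ S₂) := measure_union_le _ _
      _ = volume (convexHull ℝ S₁ ∪ σ '' convexHull ℝ S₂) := by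
          rw [measure_union₀ hm3.nullMeasurableSet hdis, hvol]
      _ ≤ volume (convexHull ℝ (T : Set Pt)) := by
          refine measure_mono (Set.union_subset (convexHull_mono ?_) ?_)
          · intro z hz
            rcases hz with rfl | hz
            · simp [T]
            · have : z ∈ A := hz
              simp [T, this]
          · rw [himg]
            refine convexHull_mono ?_
            rintro _ ⟨y, hy, rfl⟩
            rcases hy with rfl | hy
            · simp [T, σp]
            · have hy : y ∈ B := hy
              by_cases hyq : y = q
              · subst hyq
                simp [T, σq, hp]
              · have : σ y ∈ (B.erase q).image σ :=
                  Finset.mem_image_of_mem _ (Finset.mem_erase.2 ⟨hyq, hy⟩)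
                show σ y ∈ T
                exact Finset.mem_insert_of_mem (Finset.mem_union_right _ this)

lemma into_M (P : Pt) (hP : ‖P‖ = 1) (T : Finset Pt)
    (hT : ∀ z ∈ T, z = P ∨ (‖z‖ ≤ 1 ∧ ⟪z, P⟫ ≤ -1 / 2)) :
    ∃ T' : Finset Pt, (T' : Set Pt) ⊆ M ∧ T'.card ≤ T.card ∧
      volume (convexHull ℝ (T : Set Pt)) ≤ volume (convexHull ℝ (T' : Set Pt)) := by
  classical
  let N : Pt := !₂[0, -1]
  have hN : ‖N‖ = 1 := by simp [N, EuclideanSpace.norm_eq]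
  set σ : Pt ≃ₗᵢ[ℝ] Pt := (ℝ ∙ (P - N))ᗮ.reflection with hσ
  have σP : σ P = N := Submodule.reflection_sub (by rw [hP, hN])
  refine ⟨T.image σ, ?_, Finset.card_image_le, ?_⟩
  · intro z hz
    simp only [Finset.coe_image, Set.mem_image, Finset.mem_coe] at hz
    obtain ⟨y, hy, rfl⟩ := hz
    rcases hT y hy with rfl | ⟨h1, h2⟩
    · rw [σP]; simp [M, N]
    · rw [← σ.inner_map_map, σP] at h2
      rw [← σ.norm_map] at h1
      set x := σ y
      have hx1 : 1 / 2 ≤ x 1 := by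
        simp [N, PiLp.inner_apply] at h2
        linarith
      have hx : x 0 ^ 2 + x 1 ^ 2 ≤ 1 := by
        rw [← norm_sq_coord]; nlinarith [norm_nonneg x]
      have h3 : (√3) ^ 2 = 3 := Real.sq_sqrt (by norm_num)
      have h4 : (√3 * x 0) ^ 2 ≤ (3 / 2) ^ 2 := by rw [mul_pow, h3]; nlinarith
      obtain ⟨h5, h6⟩ := abs_le_of_sq_le_sq' h4 (by norm_num)
      exact ⟨hx, by linarith, by linarith⟩
  · have himg : σ '' convexHull ℝ (T : Set Pt) = convexHull ℝ (σ '' T) :=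
      σ.toLinearEquiv.toLinearMap.image_convexHull T
    have hm3 : MeasurableSet (convexHull ℝ (σ '' (T : Set Pt))) :=
      ((T.finite_toSet.image σ).isCompact_convexHull ℝ).measurableSet
    rw [Finset.coe_image, ← σ.measurePreserving.measure_preimage hm3.nullMeasurableSet, ← himg,
        Set.preimage_image_eq _ σ.injective]

/-- The point of the unit circle at angle `t`. -/
def circ (t : ℝ) : Pt := !₂[Real.cos t, Real.sin t]

lemma inner_circ (s t : ℝ) : ⟪circ s, circ t⟫ = Real.cos (s - t) := by
  simp [circ, PiLp.inner_apply, Real.cos_sub]; ring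

lemma norm_circ (t : ℝ) : ‖circ t‖ = 1 := by
  simp [circ, EuclideanSpace.norm_eq]

lemma circ_add_two_pi (t : ℝ) : circ (t + 2 * π) = circ t := by
  simp [circ]

lemma circ_exists (z : Pt) (hz : ‖z‖ = 1) (τ : ℝ) :
    ∃ φ : ℝ, 0 ≤ φ ∧ φ < 2 * π ∧ z = circ (τ + φ) := by
  have h2 : z 0 ^ 2 + z 1 ^ 2 = 1 := by rw [← norm_sq_coord, hz]; norm_num
  let c : ℂ := ⟨z 0, z 1⟩
  have hc : ‖c‖ = 1 := by
    have : ‖c‖ ^ 2 = 1 := by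
      rw [← Complex.normSq_eq_norm_sq, Complex.normSq_apply]
      simp [c]; nlinarith
    nlinarith [norm_nonneg c]
  have hz' : z = circ c.arg := by
    have h0 := Complex.norm_mul_cos_arg c
    have h1 := Complex.norm_mul_sin_arg c
    rw [hc, one_mul] at h0 h1
    ext i
    fin_cases i
    · simp [circ, h0, c]
    · simp [circ, h1, c]
  have hpi : (0 : ℝ) < 2 * π := by positivity
  obtain ⟨h3, h4⟩ := toIcoMod_mem_Ico hpi 0 (c.arg - τ)
  refine ⟨toIcoMod hpi 0 (c.arg - τ), h3, by simpa using h4, ?_⟩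
  rw [hz']
  have h5 : τ + toIcoMod hpi 0 (c.arg - τ) = c.arg - (toIcoDiv hpi 0 (c.arg - τ) : ℤ) * (2 * π) := by
    rw [toIcoMod, zsmul_eq_mul]; ring
  rw [h5]
  simp [circ]

lemma side_circ (a b φ : ℝ) : side (circ a) (circ b) (circ φ) =
    4 * Real.sin ((φ - a) / 2) * Real.sin ((b - a) / 2) * Real.sin ((b - φ) / 2) := by
  obtain ⟨x, rfl⟩ : ∃ x, φ = a + 2 * x := ⟨(φ - a) / 2, by ring⟩
  obtain ⟨y, rfl⟩ : ∃ y, b = a + 2 * x + 2 * y := ⟨(b - (a + 2 * x)) / 2, by ring⟩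
  have e1 : (a + 2 * x - a) / 2 = x := by ring
  have e2 : (a + 2 * x + 2 * y - a) / 2 = x + y := by ring
  have e3 : (a + 2 * x + 2 * y - (a + 2 * x)) / 2 = y := by ring
  rw [e1, e2, e3]
  have key : side (circ a) (circ (a + 2 * x + 2 * y)) (circ (a + 2 * x)) =
      Real.sin ((a + 2 * x + 2 * y) - (a + 2 * x)) + Real.sin ((a + 2 * x) - a)
        - Real.sin ((a + 2 * x + 2 * y) - a) := by
    generalize a + 2 * x + 2 * y = B
    generalize a + 2 * x = C
    simp [side, circ, Real.sin_sub]; ring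
  rw [key]
  have f1 : a + 2 * x + 2 * y - (a + 2 * x) = 2 * y := by ring
  have f2 : a + 2 * x - a = 2 * x := by ring
  have f3 : a + 2 * x + 2 * y - a = 2 * x + 2 * y := by ring
  rw [f1, f2, f3, Real.sin_add, Real.sin_add, Real.sin_two_mul, Real.sin_two_mul, Real.cos_two_mul,
    Real.cos_two_mul]
  have hx := Real.sin_sq_add_cos_sq x
  have hy := Real.sin_sq_add_cos_sq y
  linear_combination (-4 * Real.sin x * Real.cos x) * hy + (-4 * Real.sin y * Real.cos y) * hx

lemma cos_gt_half (x : ℝ) (h : |x| < π / 3) : 1 / 2 < Real.cos x := by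
  rw [← Real.cos_abs x, ← Real.cos_pi_div_three]
  exact Real.cos_lt_cos_of_nonneg_of_le_pi (abs_nonneg _) (by linarith [Real.pi_pos]) h

lemma cos_ge_half (x : ℝ) (h : |x| ≤ π / 3) : 1 / 2 ≤ Real.cos x := by
  rw [← Real.cos_abs x, ← Real.cos_pi_div_three]
  exact Real.cos_le_cos_of_nonneg_of_le_pi (abs_nonneg _) (by linarith [Real.pi_pos]) h

lemma angle_range (θ φ : ℝ) (h0 : 0 ≤ φ) (h1 : φ < 2 * π)
    (h2 : Real.cos φ ≤ 1 / 2) (h3 : Real.cos (φ - θ) ≤ 1 / 2) :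
    (π / 3 ≤ φ ∧ φ ≤ 5 * π / 3) ∧ (φ ≤ θ - π / 3 ∨ θ + π / 3 ≤ φ) := by
  refine ⟨⟨?_, ?_⟩, ?_⟩
  · by_contra! h
    have := cos_gt_half φ (by rw [abs_lt]; constructor <;> linarith [Real.pi_pos])
    linarith
  · by_contra! h
    have := cos_gt_half (φ - 2 * π) (by rw [abs_lt]; constructor <;> linarith [Real.pi_pos])
    rw [Real.cos_sub_two_pi] at this
    linarith
  · by_contra! h
    have := cos_gt_half (φ - θ) (by rw [abs_lt]; constructor <;> linarith [Real.pi_pos])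
    linarith

lemma core (τ θ : ℝ) (hθ1 : 2 * π / 3 ≤ θ) (hθ2 : θ ≤ π) (S : Finset Pt)
    (hS : (S : Set Pt) ⊆ arcs (circ τ) (circ (τ + θ))) :
    ∃ P : Pt, ‖P‖ = 1 ∧ ∃ T : Finset Pt, T.card ≤ S.card ∧
      (∀ z ∈ T, z = P ∨ (‖z‖ ≤ 1 ∧ ⟪z, P⟫ ≤ -1 / 2)) ∧
      volume (convexHull ℝ (S : Set Pt)) ≤ volume (convexHull ℝ (T : Set Pt)) := by
  classical
  have hpi := Real.pi_pos
  have hex : ∀ z : Pt, ∃ φ : ℝ, z ∈ S → z = circ (τ + φ) ∧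
      (π / 3 ≤ φ ∧ φ ≤ 5 * π / 3) ∧ (φ ≤ θ - π / 3 ∨ θ + π / 3 ≤ φ) := by
    intro z
    by_cases hz : z ∈ S
    · obtain ⟨h1, h2, h3⟩ := hS hz
      obtain ⟨φ, k0, k1, rfl⟩ := circ_exists z h1 τ
      refine ⟨φ, fun _ => ⟨rfl, angle_range θ φ k0 k1 ?_ ?_⟩⟩
      · rw [inner_circ] at h2
        convert h2 using 2; ring
      · rw [inner_circ] at h3
        convert h3 using 2; ring
    · exact ⟨0, fun h => absurd h hz⟩
  choose ang hang using hex
  set A := S.filter (fun z => ang z ≤ θ - π / 3) with hA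
  set B := S.filter (fun z => ¬ ang z ≤ θ - π / 3) with hB
  have hcard : A.card + B.card = S.card := Finset.card_filter_add_card_filter_not _
  have hunion : (S : Set Pt) = (A : Set Pt) ∪ B := by
    rw [← Finset.coe_union, Finset.filter_union_filter_not_eq]
  have mA : ∀ z ∈ A, z = circ (τ + ang z) ∧ π / 3 ≤ ang z ∧ ang z ≤ θ - π / 3 := by
    intro z hz
    obtain ⟨h1, h2⟩ := Finset.mem_filter.1 hz
    exact ⟨(hang z h1).1, (hang z h1).2.1.1, h2⟩
  have mB : ∀ z ∈ B, z = circ (τ + ang z) ∧ θ + π / 3 ≤ ang z ∧ ang z ≤ 5 * π / 3 := by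
    intro z hz
    obtain ⟨h1, h2⟩ := Finset.mem_filter.1 hz
    exact ⟨(hang z h1).1, (hang z h1).2.2.resolve_left h2, (hang z h1).2.1.2⟩
  rcases A.eq_empty_or_nonempty with hAe | hAn
  · refine ⟨circ (τ + θ / 2), norm_circ _, S, le_rfl, ?_, le_rfl⟩
    intro z hz
    have hzB : z ∈ B := by
      have : z ∈ (A : Set Pt) ∪ B := by rw [← hunion]; exact hz
      rw [hAe] at this
      simpa using this
    obtain ⟨h1, h2, h3⟩ := mB z hzB
    right
    rw [h1, norm_circ, inner_circ]
    refine ⟨le_rfl, ?_⟩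
    have := cos_ge_half (τ + ang z - (τ + θ / 2) - π)
      (by rw [abs_le]; constructor <;> linarith)
    rw [Real.cos_sub_pi] at this
    linarith
  rcases B.eq_empty_or_nonempty with hBe | hBn
  · refine ⟨circ (τ + θ / 2 + π), norm_circ _, S, le_rfl, ?_, le_rfl⟩
    intro z hz
    have hzA : z ∈ A := by
      have : z ∈ (A : Set Pt) ∪ B := by rw [← hunion]; exact hz
      rw [hBe] at this
      simpa using this
    obtain ⟨h1, h2, h3⟩ := mA z hzA
    right
    rw [h1, norm_circ, inner_circ]
    refine ⟨le_rfl, ?_⟩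
    have := cos_ge_half (τ + ang z - (τ + θ / 2))
      (by rw [abs_le]; constructor <;> linarith)
    have e : τ + ang z - (τ + θ / 2 + π) = (τ + ang z - (τ + θ / 2)) - π := by ring
    rw [e, Real.cos_sub_pi]
    linarith
  obtain ⟨p, hp, hpmax⟩ := A.exists_max_image ang hAn
  obtain ⟨q, hq, hqmax⟩ := B.exists_max_image ang hBn
  obtain ⟨p1, p2, p3⟩ := mA p hp
  obtain ⟨q1, q2, q3⟩ := mB q hq
  have hsin : ∀ x : ℝ, 0 ≤ x → x ≤ 2 * π → 0 ≤ Real.sin (x / 2) := fun x h0 h1 =>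
    Real.sin_nonneg_of_nonneg_of_le_pi (by linarith) (by linarith)
  have hs : ∀ z, z = circ (τ + ang z) → side p q z =
      4 * Real.sin ((ang z - ang p) / 2) * Real.sin ((ang q - ang p) / 2)
        * Real.sin ((ang q - ang z) / 2) := by
    intro z hz
    have := side_circ (τ + ang p) (τ + ang q) (τ + ang z)
    rw [← p1, ← q1, ← hz] at this
    simpa using this
  refine ⟨q, by rw [q1]; exact norm_circ _, ?_⟩
  rw [← hcard, hunion]
  refine rearr A B p q hp hq ?_ ?_ ?_ ?_ ?_
  · intro x hx; rw [(mA x hx).1]; exact norm_circ _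
  · intro x hx; rw [(mB x hx).1]; exact norm_circ _
  · intro x hx y hy
    obtain ⟨x1, x2, x3⟩ := mA x hx
    obtain ⟨y1, y2, y3⟩ := mB y hy
    rw [x1, y1, inner_circ]
    have := cos_ge_half (τ + ang x - (τ + ang y) + π)
      (by rw [abs_le]; constructor <;> linarith)
    rw [Real.cos_add_pi] at this
    linarith
  · intro x hx
    obtain ⟨x1, x2, x3⟩ := mA x hx
    have hm := hpmax x hx
    rw [hs x x1]
    have k1 := hsin (ang p - ang x) (by linarith) (by linarith)
    have k2 := hsin (ang q - ang p) (by linarith) (by linarith)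
    have k3 := hsin (ang q - ang x) (by linarith) (by linarith)
    have e : (ang x - ang p) / 2 = -((ang p - ang x) / 2) := by ring
    rw [e, Real.sin_neg]
    have := mul_nonneg (mul_nonneg k1 k2) k3
    nlinarith
  · intro y hy
    obtain ⟨y1, y2, y3⟩ := mB y hy
    have hm := hqmax y hy
    rw [hs y y1]
    have k1 := hsin (ang y - ang p) (by linarith) (by linarith)
    have k2 := hsin (ang q - ang p) (by linarith) (by linarith)
    have k3 := hsin (ang q - ang y) (by linarith) (by linarith)
    positivity

lemma cos_eq_cases (θ φ : ℝ) (h1 : 0 ≤ θ) (h2 : θ ≤ π) (k1 : 0 ≤ φ) (k2 : φ < 2 * π)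
    (h : Real.cos φ = Real.cos θ) : φ = θ ∨ φ = 2 * π - θ := by
  rcases le_total φ π with hφ | hφ
  · exact Or.inl (Real.injOn_cos ⟨k1, hφ⟩ ⟨h1, h2⟩ h)
  · right
    have h3 : Real.cos (2 * π - φ) = Real.cos θ := by rw [Real.cos_two_pi_sub]; exact h
    have := Real.injOn_cos ⟨by linarith, by linarith⟩ ⟨h1, h2⟩ h3
    linarith

lemma core' (θ : ℝ) (hθ1 : 2 * π / 3 ≤ θ) (hθ2 : θ ≤ π) (u v : Pt) (hu : ‖u‖ = 1) (hv : ‖v‖ = 1)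
    (huv : ⟪u, v⟫ = Real.cos θ) (S : Finset Pt) (hS : (S : Set Pt) ⊆ arcs u v) :
    ∃ P : Pt, ‖P‖ = 1 ∧ ∃ T : Finset Pt, T.card ≤ S.card ∧
      (∀ z ∈ T, z = P ∨ (‖z‖ ≤ 1 ∧ ⟪z, P⟫ ≤ -1 / 2)) ∧
      volume (convexHull ℝ (S : Set Pt)) ≤ volume (convexHull ℝ (T : Set Pt)) := by
  have hpi := Real.pi_pos
  obtain ⟨τ, -, -, rfl⟩ := circ_exists u hu 0
  rw [zero_add] at *
  obtain ⟨φ, k0, k1, rfl⟩ := circ_exists v hv τ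
  rw [inner_circ] at huv
  have hc : Real.cos φ = Real.cos θ := by
    rw [← huv, ← Real.cos_neg]; congr 1; ring
  rcases cos_eq_cases θ φ (by linarith) hθ2 k0 k1 hc with rfl | h
  · exact core τ φ hθ1 hθ2 S hS
  · refine core (τ + φ) θ hθ1 hθ2 S (fun z hz => ?_)
    obtain ⟨h1, h2, h3⟩ := hS hz
    refine ⟨h1, h3, ?_⟩
    have e : τ + φ + θ = τ + 2 * π := by rw [h]; ring
    rw [e, circ_add_two_pi]; exact h2

/-- Any polygon with at most `n` vertices inscribed in `M'(u,v)` (for `θ ∈ [2π/3, π]`) can be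
replaced by one of at least the same area with at most `n` vertices inscribed in `M`. -/
theorem M_inscribed_ge_M' (θ : ℝ) (hθ : θ ∈ Set.Icc (2 * π / 3) π) (u v : Pt)
    (hu : ‖u‖ = 1) (hv : ‖v‖ = 1) (huv : ⟪u, v⟫ = Real.cos θ)
    (n : ℕ) (hn : 3 ≤ n) (S : Finset Pt) (hS : (S : Set Pt) ⊆ M' u v) (hcard : S.card ≤ n) :
    ∃ T : Finset Pt, (T : Set Pt) ⊆ M ∧ T.card ≤ n ∧
      volume (convexHull ℝ (S : Set Pt)) ≤ volume (convexHull ℝ (T : Set Pt)) := by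
  obtain ⟨hθ1, hθ2⟩ := hθ
  have hpi := Real.pi_pos
  have hle : ⟪u, v⟫ ≤ -1 / 2 := by
    have := cos_ge_half (θ - π) (by rw [abs_le]; constructor <;> linarith)
    rw [Real.cos_sub_pi] at this
    linarith
  obtain ⟨S', h1, h2, h3⟩ := move_all (arcs u v) S (hS.trans (M'_subset u v hu hv hle)) ∅
  simp only [Finset.coe_empty, Set.union_empty] at h3
  obtain ⟨P, hP, T, k1, k2, k3⟩ := core' θ hθ1 hθ2 u v hu hv huv S' h1
  obtain ⟨T', l1, l2, l3⟩ := into_M P hP T k2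
  exact ⟨T', l1, by omega, h3.trans (k3.trans l3)⟩
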